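/- Let s ≥ 3 and n = T_s + 3. Then the number of partitions λ of n with deg(λ) = Δ_n is exactly 6; more precisely, exactly 1 maximizer has (A, B) = (2, 0), exactly 4 maximizers have (A, B) = (1, 1), and exactly 1 maximizer has (A, B) = (0, 2). -/

import Mathlib

/-!
Write `λ` as its set `D` of part sizes together with the multiset `E` of surplus copies, so that
`supp λ = |D|`, the gap bonus depends on `D` only, and the multiplicity bonus is the number of
distinct elements of `E`. A set of `r` positive integers has sum at least `T r`
(`T_card_le_sum`), and `T (s + 1) > T s + 3` for `s ≥ 3`, so the support is at most `s`. If it is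
`r < s`, both bonuses are at most `r`, so the degree is at most `r (r + 1) ≤ s (s - 1)`.

If the support is `s`, then `(∑ D - T s) + ∑ E = 3`. Splitting off the largest element of `D` shows
that there are `1, 1, 2, 3` sets `D` of excess `0, 1, 2, 3` (`sum_excess_zero`, ...,
`sum_excess_three`), and there are `1, 1, 2, 3` multisets `E` of sum `0, 1, 2, 3`. Of the ten
resulting pairs, six have total bonus `2` and the other four have total bonus `1`. Hence the
maximal degree is `s (s - 1) + 2`, and it is attained at exactly those six pairs.
-/


namespace PartitionDegree

/-- The `m`-th triangular number. -/
def T (m : ℕ) : ℕ := m * (m + 1) / 2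

/-- The number of distinct part sizes of a partition. -/
def supp {n : ℕ} (lam : n.Partition) : ℕ := lam.parts.toFinset.card

/-- The gap-bonus count: distinct part sizes `L ≥ 2` such that `L - 1` is not a part size. -/
def gapBonus {n : ℕ} (lam : n.Partition) : ℕ :=
  (lam.parts.toFinset.filter (fun L => 2 ≤ L ∧ (L - 1) ∉ lam.parts)).card

/-- The multiplicity-bonus count: distinct part sizes occurring with multiplicity at least 2. -/
def multBonus {n : ℕ} (lam : n.Partition) : ℕ :=
  (lam.parts.toFinset.filter (fun L => 2 ≤ lam.parts.count L)).card

/-- The degree of a partition in the partition graph. -/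
def deg {n : ℕ} (lam : n.Partition) : ℕ :=
  supp lam * (supp lam - 1) + gapBonus lam + multBonus lam

/-- The maximal degree over all partitions of `n`. -/
def maxDeg (n : ℕ) : ℕ := Finset.univ.sup (fun lam : n.Partition => deg lam)

/-- `ρ(q)`: the maximum of `a + b` over pairs with `T a + T b ≤ q`. -/
noncomputable def rho (q : ℕ) : ℕ := sSup {c : ℕ | ∃ a b : ℕ, c = a + b ∧ T a + T b ≤ q}

/-- `mu` is the conjugate of `lam`: for each `k ≥ 1`, the multiplicity of `k` in `mu`
equals (number of parts of `lam` that are `≥ k`) minus (number of parts `≥ k + 1`). -/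
def IsConjugate {n : ℕ} (lam mu : n.Partition) : Prop :=
  ∀ k : ℕ, 1 ≤ k →
    mu.parts.count k =
      Multiset.countP (fun p => k ≤ p) lam.parts -
        Multiset.countP (fun p => k + 1 ≤ p) lam.parts

/-! ### Sets of positive integers with small excess -/

lemma T_succ (m : ℕ) : T (m + 1) = T m + (m + 1) := by
  unfold T
  rw [show (m + 1) * (m + 1 + 1) = m * (m + 1) + (m + 1) * 2 by ring,
    Nat.add_mul_div_right _ _ (by norm_num)]

lemma sum_Icc (m : ℕ) : ∑ i ∈ Finset.Icc 1 m, i = T m := by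
  induction m with
  | zero => simp [T]
  | succ k ih => rw [Finset.sum_Icc_succ_top (by omega), ih, T_succ]

lemma T_mono : Monotone T := monotone_nat_of_le_succ fun m => by rw [T_succ]; omega

/-- Splitting off the largest element `M` of a set of `r + 1` positive integers. -/
lemma exists_top (r : ℕ) (D : Finset ℕ) (hpos : ∀ x ∈ D, 1 ≤ x) (hc : D.card = r + 1) :
    ∃ (M : ℕ) (D' : Finset ℕ), D = insert M D' ∧ (∀ x ∈ D', 1 ≤ x) ∧ D'.card = r ∧
      (∀ x ∈ D', x < M) ∧ r + 1 ≤ M ∧ ∑ i ∈ D, i = M + ∑ i ∈ D', i := by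
  have hne : D.Nonempty := Finset.card_pos.mp (by omega)
  have hM := D.max'_mem hne
  refine ⟨D.max' hne, D.erase (D.max' hne), (Finset.insert_erase hM).symm,
    fun x hx => hpos x (Finset.mem_of_mem_erase hx), ?_,
    fun x hx => D.lt_max'_of_mem_erase_max' hne hx, ?_, (Finset.add_sum_erase D _ hM).symm⟩
  · rw [Finset.card_erase_of_mem hM]; omega
  · have hsub : D ⊆ Finset.Icc 1 (D.max' hne) := fun x hx =>
      Finset.mem_Icc.mpr ⟨hpos x hx, D.le_max' x hx⟩
    have := Finset.card_le_card hsub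
    simp at this
    omega

lemma T_card_le_sum (r : ℕ) (D : Finset ℕ) (hpos : ∀ x ∈ D, 1 ≤ x) (hc : D.card = r) :
    T r ≤ ∑ i ∈ D, i := by
  induction r generalizing D with
  | zero => simp [T]
  | succ r ih =>
    obtain ⟨M, D', -, hpos', hc', -, hM, hsum⟩ := exists_top r D hpos hc
    have := ih D' hpos' hc'
    rw [T_succ]
    omega

lemma sum_excess_zero (r : ℕ) (D : Finset ℕ) (hpos : ∀ x ∈ D, 1 ≤ x) (hc : D.card = r)
    (hs : ∑ i ∈ D, i = T r) : D = Finset.Icc 1 r := by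
  induction r generalizing D with
  | zero => simpa using hc
  | succ r ih =>
    obtain ⟨M, D', rfl, hpos', hc', -, hM, hsum⟩ := exists_top r D hpos hc
    have := T_card_le_sum r D' hpos' hc'
    rw [T_succ] at hs
    obtain rfl : M = r + 1 := by omega
    rw [ih D' hpos' hc' (by omega)]
    ext x
    simp only [Finset.mem_insert, Finset.mem_Icc]
    omega

/-- A set of positive excess `e` is a set of excess `e - j` together with a top element
`r + 1 + j`, where `1 ≤ j ≤ e`. Here `j = 0` is excluded because a set of `r + 1` positive integers
with maximum `r + 1` is `{1, …, r + 1}`, which has excess `0`. -/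
lemma exists_top_of_excess (r e : ℕ) (he : 1 ≤ e) (D : Finset ℕ) (hpos : ∀ x ∈ D, 1 ≤ x)
    (hc : D.card = r + 1) (hs : ∑ i ∈ D, i = T (r + 1) + e) :
    ∃ (j : ℕ) (D' : Finset ℕ), 1 ≤ j ∧ j ≤ e ∧ D = insert (r + 1 + j) D' ∧ (∀ x ∈ D', 1 ≤ x) ∧
      D'.card = r ∧ (∀ x ∈ D', x < r + 1 + j) ∧ ∑ i ∈ D', i = T r + (e - j) := by
  obtain ⟨M, D', rfl, hpos', hc', hlt, hM, hsum⟩ := exists_top r D hpos hc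
  have hT := T_card_le_sum r D' hpos' hc'
  have hM' : M ≠ r + 1 := by
    rintro rfl
    have hsub : D' ⊆ Finset.Icc 1 r := fun x hx =>
      Finset.mem_Icc.mpr ⟨hpos' x hx, by have := hlt x hx; omega⟩
    have hD' := Finset.eq_of_subset_of_card_le hsub (by simp [hc'])
    rw [hsum, hD', sum_Icc, T_succ] at hs
    omega
  rw [T_succ] at hs
  obtain ⟨j, rfl⟩ := Nat.exists_eq_add_of_le hM
  exact ⟨j, D', by omega, by omega, rfl, hpos', hc', hlt, by omega⟩

lemma sum_excess_one (r : ℕ) (D : Finset ℕ) (hpos : ∀ x ∈ D, 1 ≤ x) (hc : D.card = r + 1)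
    (hs : ∑ i ∈ D, i = T (r + 1) + 1) : D = insert (r + 2) (Finset.Icc 1 r) := by
  obtain ⟨j, D', h1, h2, rfl, hpos', hc', -, hsum⟩ :=
    exists_top_of_excess r 1 le_rfl D hpos hc hs
  obtain rfl : j = 1 := by omega
  rw [sum_excess_zero r D' hpos' hc' hsum]

lemma sum_excess_two (r : ℕ) (D : Finset ℕ) (hpos : ∀ x ∈ D, 1 ≤ x) (hc : D.card = r + 2)
    (hs : ∑ i ∈ D, i = T (r + 2) + 2) :
    D = insert (r + 4) (Finset.Icc 1 (r + 1)) ∨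
      D = insert (r + 3) (insert (r + 2) (Finset.Icc 1 r)) := by
  obtain ⟨j, D', h1, h2, rfl, hpos', hc', -, hsum⟩ :=
    exists_top_of_excess (r + 1) 2 (by norm_num) D hpos hc hs
  obtain rfl | rfl : j = 1 ∨ j = 2 := by omega
  · right
    rw [sum_excess_one r D' hpos' hc' hsum]
  · left
    rw [sum_excess_zero _ D' hpos' hc' hsum]

lemma sum_excess_three (r : ℕ) (D : Finset ℕ) (hpos : ∀ x ∈ D, 1 ≤ x) (hc : D.card = r + 3)
    (hs : ∑ i ∈ D, i = T (r + 3) + 3) :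
    D = insert (r + 6) (Finset.Icc 1 (r + 2)) ∨
      D = insert (r + 5) (insert (r + 3) (Finset.Icc 1 (r + 1))) ∨
      D = insert (r + 4) (insert (r + 3) (insert (r + 2) (Finset.Icc 1 r))) := by
  obtain ⟨j, D', h1, h2, rfl, hpos', hc', hlt, hsum⟩ :=
    exists_top_of_excess (r + 2) 3 (by norm_num) D hpos hc hs
  obtain rfl | rfl | rfl : j = 1 ∨ j = 2 ∨ j = 3 := by omega
  · right; right
    -- The other set of excess `2` contains `r + 4`, which would then not be below the top element.
    rcases sum_excess_two r D' hpos' hc' hsum with rfl | rfl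
    · have := hlt (r + 4) (by simp)
      omega
    · rfl
  · right; left
    rw [sum_excess_one _ D' hpos' hc' hsum]
  · left
    rw [sum_excess_zero _ D' hpos' hc' hsum]

/-! ### Multisets of positive integers with small sum -/

lemma multiset_sum_zero (E : Multiset ℕ) (hpos : ∀ x ∈ E, 1 ≤ x) (hs : E.sum = 0) : E = 0 := by
  refine Multiset.eq_zero_of_forall_notMem fun x hx => ?_
  have := Multiset.le_sum_of_mem hx
  have := hpos x hx
  omega

lemma exists_cons_of_sum (E : Multiset ℕ) (hpos : ∀ x ∈ E, 1 ≤ x) (hs : 1 ≤ E.sum) :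
    ∃ (a : ℕ) (E' : Multiset ℕ), E = a ::ₘ E' ∧ 1 ≤ a ∧ (∀ x ∈ E', 1 ≤ x) ∧
      E.sum = a + E'.sum := by
  obtain ⟨a, ha⟩ : ∃ a, a ∈ E := by
    refine Multiset.exists_mem_of_ne_zero ?_
    rintro rfl
    simp at hs
  obtain ⟨E', rfl⟩ := Multiset.exists_cons_of_mem ha
  exact ⟨a, E', rfl, hpos a ha, fun x hx => hpos x (Multiset.mem_cons_of_mem hx), by simp⟩

lemma multiset_sum_one (E : Multiset ℕ) (hpos : ∀ x ∈ E, 1 ≤ x) (hs : E.sum = 1) :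
    E = {1} := by
  obtain ⟨a, E', rfl, ha, hpos', hsum⟩ := exists_cons_of_sum E hpos (by omega)
  obtain rfl : a = 1 := by omega
  rw [multiset_sum_zero E' hpos' (by omega)]
  rfl

lemma multiset_sum_two (E : Multiset ℕ) (hpos : ∀ x ∈ E, 1 ≤ x) (hs : E.sum = 2) :
    E = {2} ∨ E = {1, 1} := by
  obtain ⟨a, E', rfl, ha, hpos', hsum⟩ := exists_cons_of_sum E hpos (by omega)
  obtain rfl | rfl : a = 1 ∨ a = 2 := by omega
  · rw [multiset_sum_one E' hpos' (by omega)]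
    exact Or.inr rfl
  · rw [multiset_sum_zero E' hpos' (by omega)]
    exact Or.inl rfl

lemma multiset_sum_three (E : Multiset ℕ) (hpos : ∀ x ∈ E, 1 ≤ x) (hs : E.sum = 3) :
    E = {3} ∨ E = {1, 1, 1} ∨ E = {1, 2} := by
  obtain ⟨a, E', rfl, ha, hpos', hsum⟩ := exists_cons_of_sum E hpos (by omega)
  obtain rfl | rfl | rfl : a = 1 ∨ a = 2 ∨ a = 3 := by omega
  · rcases multiset_sum_two E' hpos' (by omega) with rfl | rfl <;> decide
  · rw [multiset_sum_one E' hpos' (by omega)]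
    decide
  · rw [multiset_sum_zero E' hpos' (by omega)]
    exact Or.inl rfl

/-! ### Encoding a partition by its part sizes and surplus copies -/

/-- The pair `(D, E)` of a partition: its set of part sizes `D`, and the multiset `E` left after
removing one copy of each part size. -/
def code {n : ℕ} (lam : n.Partition) : Finset ℕ × Multiset ℕ :=
  (lam.parts.toFinset, lam.parts - lam.parts.toFinset.val)

/-- The gap-bonus count of a set of part sizes. -/
def gapCount (D : Finset ℕ) : ℕ := (D.filter (fun L => 2 ≤ L ∧ (L - 1) ∉ D)).card

lemma parts_eq {n : ℕ} (lam : n.Partition) :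
    lam.parts = (code lam).1.val + (code lam).2 := by
  have h : lam.parts.toFinset.val ≤ lam.parts := by
    rw [Multiset.toFinset_val]
    exact Multiset.dedup_le _
  exact (add_tsub_cancel_of_le h).symm

lemma code_injective (n : ℕ) : Function.Injective (code : n.Partition → _) := by
  intro a b h
  apply Nat.Partition.ext
  rw [parts_eq a, parts_eq b, h]

lemma supp_eq {n : ℕ} (lam : n.Partition) : supp lam = (code lam).1.card := rfl

lemma gapBonus_eq {n : ℕ} (lam : n.Partition) : gapBonus lam = gapCount (code lam).1 := by
  simp [gapBonus, gapCount, code]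

lemma multBonus_eq {n : ℕ} (lam : n.Partition) :
    multBonus lam = (code lam).2.toFinset.card := by
  unfold multBonus code
  congr 1
  ext x
  simp only [Finset.mem_filter, Multiset.mem_toFinset, ← Multiset.count_pos,
    Multiset.count_sub, Multiset.toFinset_val, Multiset.count_dedup]
  split_ifs <;> omega

lemma code_pos {n : ℕ} (lam : n.Partition) :
    (∀ x ∈ (code lam).1, 1 ≤ x) ∧ (∀ x ∈ (code lam).2, 1 ≤ x) :=
  ⟨fun _ hx => lam.parts_pos (Multiset.mem_toFinset.mp hx),
    fun _ hx => lam.parts_pos (Multiset.mem_of_le (Multiset.sub_le_self _ _) hx)⟩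

lemma code_sum {n : ℕ} (lam : n.Partition) :
    ∑ i ∈ (code lam).1, i + (code lam).2.sum = n := by
  have h := lam.parts_sum
  rw [parts_eq, Multiset.sum_add] at h
  rwa [Finset.sum_val] at h

lemma exists_code {n : ℕ} (D : Finset ℕ) (E : Multiset ℕ) (hpos : ∀ x ∈ D, 1 ≤ x)
    (hE : ∀ x ∈ E, x ∈ D) (hs : ∑ i ∈ D, i + E.sum = n) :
    ∃ lam : n.Partition, code lam = (D, E) := by
  have hD : (D.val + E).toFinset = D := by
    ext x
    simp only [Multiset.mem_toFinset, Multiset.mem_add, Finset.mem_val]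
    exact ⟨fun h => h.elim id (hE x), Or.inl⟩
  refine ⟨⟨D.val + E, ?_, ?_⟩, ?_⟩
  · intro i hi
    rw [← Multiset.mem_toFinset, hD] at hi
    exact hpos i hi
  · rw [← hs, Multiset.sum_add, Finset.sum_val]
    rfl
  · simp [code, hD]

/-! ### The six maximizers -/

/-- The code of the maximizer with `(A, B) = (2, 0)`, for `s = t + 3`. -/
def profile20 (t : ℕ) : Finset (Finset ℕ × Multiset ℕ) :=
  {(insert (t + 5) (insert (t + 3) (Finset.Icc 1 (t + 1))), 0)}

/-- The codes of the maximizers with `(A, B) = (1, 1)`, for `s = t + 3`. -/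
def profile11 (t : ℕ) : Finset (Finset ℕ × Multiset ℕ) :=
  {(insert (t + 5) (Finset.Icc 1 (t + 2)), {1}),
   (insert (t + 4) (insert (t + 3) (Finset.Icc 1 (t + 1))), {1}),
   (insert (t + 4) (Finset.Icc 1 (t + 2)), {2}),
   (insert (t + 4) (Finset.Icc 1 (t + 2)), {1, 1})}

/-- The code of the maximizer with `(A, B) = (0, 2)`, for `s = t + 3`. -/
def profile02 (t : ℕ) : Finset (Finset ℕ × Multiset ℕ) :=
  {(Finset.Icc 1 (t + 3), {1, 2})}

lemma gapCount_eq {D : Finset ℕ} (S : Finset ℕ)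
    (h : ∀ x, (x ∈ D ∧ 2 ≤ x ∧ x - 1 ∉ D) ↔ x ∈ S) : gapCount D = S.card := by
  unfold gapCount
  congr 1
  ext x
  rw [Finset.mem_filter, h]

lemma gapCount_Icc (m : ℕ) : gapCount (Finset.Icc 1 m) = 0 :=
  gapCount_eq ∅ fun x => by simp; omega

lemma gapCount_one (m k : ℕ) (hk : m + 2 ≤ k) :
    gapCount (insert k (Finset.Icc 1 m)) = 1 :=
  gapCount_eq {k} fun x => by simp; omega

lemma gapCount_adjacent (m : ℕ) :
    gapCount (insert (m + 3) (insert (m + 2) (Finset.Icc 1 m))) = 1 :=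
  gapCount_eq {m + 2} fun x => by simp; omega

lemma gapCount_triple (m : ℕ) :
    gapCount (insert (m + 4) (insert (m + 3) (insert (m + 2) (Finset.Icc 1 m)))) = 1 :=
  gapCount_eq {m + 2} fun x => by simp; omega

lemma gapCount_two (m : ℕ) :
    gapCount (insert (m + 4) (insert (m + 2) (Finset.Icc 1 m))) = 2 := by
  rw [gapCount_eq {m + 2, m + 4} fun x => by simp; omega]
  exact Finset.card_pair (by omega)

lemma gap_mult_of_mem20 {t : ℕ} {p : Finset ℕ × Multiset ℕ} (h : p ∈ profile20 t) :
    p.1.card = t + 3 ∧ gapCount p.1 = 2 ∧ p.2.toFinset.card = 0 := by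
  simp only [profile20, Finset.mem_singleton] at h
  subst h
  refine ⟨?_, gapCount_two _, rfl⟩
  simp

lemma gap_mult_of_mem11 {t : ℕ} {p : Finset ℕ × Multiset ℕ} (h : p ∈ profile11 t) :
    p.1.card = t + 3 ∧ gapCount p.1 = 1 ∧ p.2.toFinset.card = 1 := by
  simp only [profile11, Finset.mem_insert, Finset.mem_singleton] at h
  rcases h with rfl | rfl | rfl | rfl
  · exact ⟨by simp, gapCount_one _ _ (by omega), rfl⟩
  · exact ⟨by simp, gapCount_adjacent _, rfl⟩
  · exact ⟨by simp, gapCount_one _ _ (by omega), rfl⟩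
  · exact ⟨by simp, gapCount_one _ _ (by omega), rfl⟩

lemma gap_mult_of_mem02 {t : ℕ} {p : Finset ℕ × Multiset ℕ} (h : p ∈ profile02 t) :
    p.1.card = t + 3 ∧ gapCount p.1 = 0 ∧ p.2.toFinset.card = 2 := by
  simp only [profile02, Finset.mem_singleton] at h
  subst h
  exact ⟨by simp, gapCount_Icc _, rfl⟩

/-- Every pair in the three profiles is the code of a partition of `T (t + 3) + 3`. -/
lemma exists_code_of_mem {t : ℕ} {p : Finset ℕ × Multiset ℕ}
    (h : p ∈ profile20 t ∨ p ∈ profile11 t ∨ p ∈ profile02 t) :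
    ∃ lam : (T (t + 3) + 3).Partition, code lam = p := by
  have e2 : T (t + 2) = T (t + 1) + (t + 2) := T_succ (t + 1)
  have e3 : T (t + 3) = T (t + 2) + (t + 3) := T_succ (t + 2)
  simp only [profile20, profile11, profile02, Finset.mem_insert, Finset.mem_singleton] at h
  rcases h with rfl | (rfl | rfl | rfl | rfl) | rfl <;> apply exists_code <;>
    first
    | (intro x hx; simp at hx; done)
    | (intro x hx; simp at hx ⊢; omega)
    | (repeat rw [Finset.sum_insert (by simp)]
       rw [sum_Icc]
       simp
       try omega)

/-- A partition of full support `t + 3` is one of the six listed ones or has total bonus `1`. -/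
lemma classify (t : ℕ) (lam : (T (t + 3) + 3).Partition) (hs : supp lam = t + 3) :
    code lam ∈ profile20 t ∨ code lam ∈ profile11 t ∨ code lam ∈ profile02 t ∨
      gapBonus lam + multBonus lam = 1 := by
  rw [gapBonus_eq, multBonus_eq]
  rw [supp_eq] at hs
  obtain ⟨hD, hE⟩ := code_pos lam
  have hsum := code_sum lam
  generalize code lam = p at *
  obtain ⟨D, E⟩ := p
  dsimp only at *
  have hT := T_card_le_sum _ D hD hs
  simp only [profile20, profile11, profile02, Finset.mem_insert, Finset.mem_singleton,
    Prod.mk.injEq]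
  obtain h | h | h | h : E.sum = 0 ∨ E.sum = 1 ∨ E.sum = 2 ∨ E.sum = 3 := by omega
  · obtain rfl := multiset_sum_zero E hE h
    rcases sum_excess_three t D hD hs (by omega) with rfl | rfl | rfl
    · have := gapCount_one (t + 2) (t + 6) (by omega)
      simp [this]
    · simp
    · simp [gapCount_triple]
  · obtain rfl := multiset_sum_one E hE h
    rcases sum_excess_two (t + 1) D hD hs (by rw [show t + 1 + 2 = t + 3 from rfl]; omega)
      with rfl | rfl <;> simp
  · obtain rfl := sum_excess_one (t + 2) D hD hs (by rw [show t + 2 + 1 = t + 3 from rfl]; omega)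
    rcases multiset_sum_two E hE h with rfl | rfl <;> simp
  · obtain rfl := sum_excess_zero (t + 3) D hD hs (by omega)
    have := gapCount_Icc (t + 3)
    rcases multiset_sum_three E hE h with rfl | rfl | rfl <;> simp [this]

lemma supp_le (t : ℕ) (lam : (T (t + 3) + 3).Partition) : supp lam ≤ t + 3 := by
  by_contra! hlt
  have h1 := T_card_le_sum _ _ (code_pos lam).1 (supp_eq lam).symm
  have h2 := code_sum lam
  have h3 : T (t + 3 + 1) ≤ T (supp lam) := T_mono hlt
  rw [T_succ] at h3
  omega

lemma gapBonus_le {n : ℕ} (lam : n.Partition) : gapBonus lam ≤ supp lam :=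
  Finset.card_filter_le _ _

lemma multBonus_le {n : ℕ} (lam : n.Partition) : multBonus lam ≤ supp lam :=
  Finset.card_filter_le _ _

/-- Below full support the bonuses cannot make up for the loss in the
quadratic term. -/
lemma deg_lt_of_supp_lt (t : ℕ) {n : ℕ} (lam : n.Partition) (h : supp lam < t + 3) :
    deg lam < (t + 3) * (t + 2) + 2 := by
  have hA := gapBonus_le lam
  have hB := multBonus_le lam
  have hdeg : deg lam ≤ supp lam * (supp lam + 1) := by
    unfold deg
    generalize supp lam = r at *
    rcases r with _ | r
    · omega
    · simp only [Nat.add_sub_cancel]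
      nlinarith
  have : supp lam * (supp lam + 1) ≤ (t + 2) * (t + 3) :=
    Nat.mul_le_mul (by omega) (by omega)
  nlinarith

lemma deg_of_supp_eq (t : ℕ) {n : ℕ} (lam : n.Partition) (h : supp lam = t + 3) :
    deg lam = (t + 3) * (t + 2) + (gapBonus lam + multBonus lam) := by
  unfold deg
  rw [h, add_assoc]
  rfl

lemma deg_of_mem (t : ℕ) (lam : (T (t + 3) + 3).Partition)
    (h : code lam ∈ profile20 t ∨ code lam ∈ profile11 t ∨ code lam ∈ profile02 t) :
    deg lam = (t + 3) * (t + 2) + 2 := by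
  have key : (code lam).1.card = t + 3 ∧
      gapCount (code lam).1 + (code lam).2.toFinset.card = 2 := by
    rcases h with h | h | h
    · have := gap_mult_of_mem20 h; omega
    · have := gap_mult_of_mem11 h; omega
    · have := gap_mult_of_mem02 h; omega
  rw [deg_of_supp_eq t lam key.1, gapBonus_eq, multBonus_eq, key.2]

lemma mem_or_deg_lt (t : ℕ) (lam : (T (t + 3) + 3).Partition) :
    (code lam ∈ profile20 t ∨ code lam ∈ profile11 t ∨ code lam ∈ profile02 t) ∨
      deg lam < (t + 3) * (t + 2) + 2 := by
  rcases (supp_le t lam).lt_or_eq with h | h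
  · exact Or.inr (deg_lt_of_supp_lt t lam h)
  · rcases classify t lam h with h' | h' | h' | h'
    · exact Or.inl (Or.inl h')
    · exact Or.inl (Or.inr (Or.inl h'))
    · exact Or.inl (Or.inr (Or.inr h'))
    · right
      rw [deg_of_supp_eq t lam h]
      omega

lemma maxDeg_eq (t : ℕ) : maxDeg (T (t + 3) + 3) = (t + 3) * (t + 2) + 2 := by
  apply le_antisymm
  · refine Finset.sup_le fun lam _ => ?_
    rcases mem_or_deg_lt t lam with h | h
    · exact (deg_of_mem t lam h).le
    · exact h.le
  · obtain ⟨lam, hlam⟩ := exists_code_of_mem (t := t) (Or.inl (Finset.mem_singleton_self _))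
    rw [← deg_of_mem t lam (Or.inl (hlam ▸ Finset.mem_singleton_self _))]
    exact Finset.le_sup (f := fun lam : (T (t + 3) + 3).Partition => deg lam)
      (Finset.mem_univ lam)

lemma deg_eq_max_iff (t : ℕ) (lam : (T (t + 3) + 3).Partition) :
    deg lam = maxDeg (T (t + 3) + 3) ↔
      code lam ∈ profile20 t ∨ code lam ∈ profile11 t ∨ code lam ∈ profile02 t := by
  rw [maxDeg_eq]
  refine ⟨fun h => ?_, deg_of_mem t lam⟩
  rcases mem_or_deg_lt t lam with hmem | hlt
  · exact hmem
  · omega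

/-- Partitions described by a condition on their code are counted by counting codes. -/
lemma card_filter_code {n : ℕ} (P : n.Partition → Prop) [DecidablePred P]
    (S : Finset (Finset ℕ × Multiset ℕ)) (hP : ∀ lam, P lam ↔ code lam ∈ S)
    (hS : ∀ p ∈ S, ∃ lam : n.Partition, code lam = p) :
    (Finset.univ.filter P).card = S.card := by
  rw [← Finset.card_image_of_injective _ (code_injective n)]
  congr 1
  ext p
  simp only [Finset.mem_image, Finset.mem_filter, Finset.mem_univ, true_and]
  constructor
  · rintro ⟨lam, h, rfl⟩
    exact (hP lam).mp h
  · intro h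
    obtain ⟨lam, rfl⟩ := hS p h
    exact ⟨lam, (hP lam).mpr h, rfl⟩

lemma card_profile11 (t : ℕ) : (profile11 t).card = 4 := by
  -- Only the first two codes share their second component; `t + 5` separates their sets.
  have hne : insert (t + 5) (Finset.Icc 1 (t + 2)) ≠
      insert (t + 4) (insert (t + 3) (Finset.Icc 1 (t + 1))) := by
    intro h
    have : t + 5 ∈ insert (t + 4) (insert (t + 3) (Finset.Icc 1 (t + 1))) :=
      h ▸ Finset.mem_insert_self _ _
    simp at this
  have h1 : ({1} : Multiset ℕ) ≠ {2} := by decide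
  have h2 : ({1} : Multiset ℕ) ≠ {1, 1} := by decide
  have h3 : ({2} : Multiset ℕ) ≠ {1, 1} := by decide
  unfold profile11
  rw [Finset.card_insert_of_notMem, Finset.card_insert_of_notMem, Finset.card_insert_of_notMem,
    Finset.card_singleton]
  all_goals
    simp only [Finset.mem_insert, Finset.mem_singleton, Prod.mk.injEq, not_or, not_and]
  · exact fun _ => h3
  · exact ⟨fun _ => h1, fun _ => h2⟩
  · exact ⟨fun h => absurd h hne, fun _ => h1, fun _ => h2⟩

/-- for `n = T s + 3` with `s ≥ 3`, there are exactly `6` maximizers: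
`1` with profile `(2,0)`, `4` with profile `(1,1)`, and `1` with profile `(0,2)`. -/
theorem third_window (s : ℕ) (hs : 3 ≤ s) :
    (Finset.univ.filter
        (fun lam : (T s + 3).Partition => deg lam = maxDeg (T s + 3))).card = 6 ∧
      (Finset.univ.filter
        (fun lam : (T s + 3).Partition =>
          deg lam = maxDeg (T s + 3) ∧ gapBonus lam = 2 ∧ multBonus lam = 0)).card = 1 ∧
      (Finset.univ.filter
        (fun lam : (T s + 3).Partition =>
          deg lam = maxDeg (T s + 3) ∧ gapBonus lam = 1 ∧ multBonus lam = 1)).card = 4 ∧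
      (Finset.univ.filter
        (fun lam : (T s + 3).Partition =>
          deg lam = maxDeg (T s + 3) ∧ gapBonus lam = 0 ∧ multBonus lam = 2)).card = 1 := by
  obtain ⟨t, rfl⟩ : ∃ t, s = t + 3 := ⟨s - 3, by omega⟩
  have h20 := @gap_mult_of_mem20 t
  have h11 := @gap_mult_of_mem11 t
  have h02 := @gap_mult_of_mem02 t
  refine ⟨?_, ?_, ?_, ?_⟩
  · rw [card_filter_code _ (profile20 t ∪ (profile11 t ∪ profile02 t))
      (fun lam => by rw [deg_eq_max_iff]; simp only [Finset.mem_union])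
      (fun p hp => exists_code_of_mem (by simpa only [Finset.mem_union] using hp)),
      Finset.card_union_of_disjoint, Finset.card_union_of_disjoint, card_profile11]
    · rfl
    · refine Finset.disjoint_left.mpr fun p hp hp' => ?_
      have := h11 hp
      have := h02 hp'
      omega
    · refine Finset.disjoint_left.mpr fun p hp hp' => ?_
      have := h20 hp
      rcases Finset.mem_union.mp hp' with hp' | hp'
      · have := h11 hp'
        omega
      · have := h02 hp'
        omega
  · rw [card_filter_code _ (profile20 t) _ fun p hp => exists_code_of_mem (Or.inl hp)]
    · rfl
    · intro lam
      rw [deg_eq_max_iff, gapBonus_eq, multBonus_eq]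
      specialize @h20 (code lam)
      specialize @h11 (code lam)
      specialize @h02 (code lam)
      grind
  · rw [card_filter_code _ (profile11 t) _ fun p hp => exists_code_of_mem (Or.inr (Or.inl hp)),
      card_profile11]
    intro lam
    rw [deg_eq_max_iff, gapBonus_eq, multBonus_eq]
    specialize @h20 (code lam)
    specialize @h11 (code lam)
    specialize @h02 (code lam)
    grind
  · rw [card_filter_code _ (profile02 t) _ fun p hp => exists_code_of_mem (Or.inr (Or.inr hp))]
    · rfl
    · intro lam
      rw [deg_eq_max_iff, gapBonus_eq, multBonus_eq]
      specialize @h20 (code lam)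
      specialize @h11 (code lam)
      specialize @h02 (code lam)
      grind

end PartitionDegree
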